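/- For all integers 0 ≤ k₀ ≤ k and all χ_{k₀},…,χ_k ∈ 𝔛 with Pr(r̄(j)=χ_j for all k₀ ≤ j ≤ k) > 0, writing χ_k = (α_k,β_k,γ_k,δ_k), the following holds for every χ' = (α',β',γ',δ') ∈ 𝔛 with f(β') = 1: Pr(r̄(k+1)=χ' | r̄(j)=χ_j for all k₀ ≤ j ≤ k) = 𝟙(α'=γ' and δ'=1) · P_{α_k α'} · Q_{β_k β'}. -/

import Mathlib

open MeasureTheory ProbabilityTheory Matrix

noncomputable section

/-- The state space `[N] × [M] × [N] × [T]` of the extended process `r̄`.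
`Fin N`, `Fin M`, `Fin T` play the roles of `[N] = {1,…,N}`, `[M]`, `[T]`
(with `Fin T` being the 0-indexed version of `[T] = {1,…,T}`, i.e. `δ ∈ [T]`
corresponds to `δ - 1 : Fin T`). -/
abbrev XT (NN MM T : ℕ) : Type := Fin NN × Fin MM × Fin NN × Fin T

/-- `X` is a time-homogeneous Markov chain with transition probability matrix `P`:
for every `k`, every state `j` and every sequence of states `i`,
`Pr(X(k+1) = j ∧ X(l) = i l for all l ≤ k) = P (i k) j * Pr(X(l) = i l for all l ≤ k)`. -/
def IsMarkovChain {Ω : Type} {_mΩ : MeasurableSpace Ω} (μ : Measure Ω) {S : Type}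
    (X : ℕ → Ω → S) (P : S → S → ℝ) : Prop :=
  ∀ (k : ℕ) (j : S) (i : ℕ → S),
    (μ {ω | X (k + 1) ω = j ∧ ∀ l ≤ k, X l ω = i l}).toReal
      = P (i k) j * (μ {ω | ∀ l ≤ k, X l ω = i l}).toReal

/-- `⌊m⌋_T`, the unique element of `{0,…,T-1}` congruent to `m` modulo `T`, as `Fin T`. -/
def intToFin (T : ℕ) [NeZero T] (a : ℤ) : Fin T :=
  ⟨(a % (T : ℤ)).toNat, by
    have hT : 0 < (T : ℤ) := by
      exact_mod_cast Nat.pos_of_ne_zero (NeZero.ne T)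
    have h1 : 0 ≤ a % (T : ℤ) := Int.emod_nonneg a (by omega)
    have h2 : a % (T : ℤ) < (T : ℤ) := Int.emod_lt_of_pos a hT
    omega⟩

-- `τ(k)`: the most recent observation time `≤ k` (i.e. the largest `j ≤ k` with
-- `f(s(j)) = 1`), or `τ₀` if no observation has occurred up to time `k` (`k < t₀`).
open Classical in
def tauZ {Ω : Type} {MM : ℕ} (s : ℕ → Ω → Fin MM) (f : Fin MM → Bool)
    (τ₀ : ℤ) (k : ℕ) (ω : Ω) : ℤ :=
  if ∃ j ≤ k, f (s j ω) = true
  then ((Nat.findGreatest (fun j => f (s j ω) = true) k : ℕ) : ℤ)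
  else τ₀

-- `σ(k) = r(τ(k))` if an observation occurred by time `k` (i.e. `k ≥ t₀`), else `σ₀`.
open Classical in
def sigmaProc {Ω : Type} {NN MM : ℕ} (r : ℕ → Ω → Fin NN) (s : ℕ → Ω → Fin MM)
    (f : Fin MM → Bool) (σ₀ : Fin NN) (k : ℕ) (ω : Ω) : Fin NN :=
  if ∃ j ≤ k, f (s j ω) = true
  then r (Nat.findGreatest (fun j => f (s j ω) = true) k) ω
  else σ₀

/-- `ρ(k) = ⌊k - τ(k)⌋_T + 1 ∈ [T]`, represented 0-indexed as `⌊k - τ(k)⌋_T : Fin T`. -/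
def rhoProc {Ω : Type} {MM T : ℕ} [NeZero T] (s : ℕ → Ω → Fin MM) (f : Fin MM → Bool)
    (τ₀ : ℤ) (k : ℕ) (ω : Ω) : Fin T :=
  intToFin T ((k : ℤ) - tauZ s f τ₀ k ω)

/-- The extended process `r̄(k) = (r(k), s(k), σ(k), ρ(k))`. -/
def rbarProc {Ω : Type} {NN MM T : ℕ} [NeZero T] (r : ℕ → Ω → Fin NN)
    (s : ℕ → Ω → Fin MM) (f : Fin MM → Bool) (τ₀ : ℤ) (σ₀ : Fin NN)
    (k : ℕ) (ω : Ω) : XT NN MM T :=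
  (r k ω, s k ω, sigmaProc r s f σ₀ k ω, rhoProc s f τ₀ k ω)

/-- Membership in `𝔛`: if `f(β) = 1` then `α = γ` and `δ = 1` (0-indexed: `δ = 0`). -/
def inX {NN MM T : ℕ} [NeZero T] (f : Fin MM → Bool) (χ : XT NN MM T) : Prop :=
  f χ.2.1 = true → χ.1 = χ.2.2.1 ∧ χ.2.2.2 = 0

/-- The transition probabilities `p̄_{χχ'}` of the extended chain. The condition
`⌊δ' - δ - 1⌋_T = 0` for `δ, δ' ∈ [T]` is, in 0-indexed form, `δ' = δ + 1` in `Fin T`. -/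
def pbar {NN MM T : ℕ} [NeZero T] (P : Matrix (Fin NN) (Fin NN) ℝ)
    (Q : Matrix (Fin MM) (Fin MM) ℝ) (f : Fin MM → Bool) (χ χ' : XT NN MM T) : ℝ :=
  (if f χ'.2.1 = true
    then (if χ'.1 = χ'.2.2.1 ∧ χ'.2.2.2 = 0 then (1 : ℝ) else 0)
    else (if χ'.2.2.1 = χ.2.2.1 ∧ χ'.2.2.2 = χ.2.2.2 + 1 then (1 : ℝ) else 0))
  * P χ.1 χ'.1 * Q χ.2.1 χ'.2.1

/-- The state trajectory of the closed-loop system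
`x(k+1) = A(mode(k)) x(k) + E(mode(k)) w(k)`, `x(0) = x₀`. -/
def traj {Ω S : Type} {n q : ℕ}
    (Amat : S → Matrix (Fin n) (Fin n) ℝ) (Emat : S → Matrix (Fin n) (Fin q) ℝ)
    (mode : ℕ → Ω → S) (w : ℕ → Ω → Fin q → ℝ) (x0 : Fin n → ℝ) : ℕ → Ω → Fin n → ℝ
  | 0, _ => x0
  | (k + 1), ω =>
      (Amat (mode k ω)).mulVec (traj Amat Emat mode w x0 k ω)
        + (Emat (mode k ω)).mulVec (w k ω)

/-- `A_{K,χ} = A_α + B_α K_{γ,δ}`. -/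
def AKmat {NN MM T n m : ℕ} (A : Fin NN → Matrix (Fin n) (Fin n) ℝ)
    (B : Fin NN → Matrix (Fin n) (Fin m) ℝ)
    (K : Fin NN → Fin T → Matrix (Fin m) (Fin n) ℝ) (χ : XT NN MM T) :
    Matrix (Fin n) (Fin n) ℝ :=
  A χ.1 + B χ.1 * K χ.2.2.1 χ.2.2.2

/-- `C_{K,χ} = C_α + D_α K_{γ,δ}`. -/
def CKmat {NN MM T n m ℓ : ℕ} (C : Fin NN → Matrix (Fin ℓ) (Fin n) ℝ)
    (D : Fin NN → Matrix (Fin ℓ) (Fin m) ℝ)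
    (K : Fin NN → Fin T → Matrix (Fin m) (Fin n) ℝ) (χ : XT NN MM T) :
    Matrix (Fin ℓ) (Fin n) ℝ :=
  C χ.1 + D χ.1 * K χ.2.2.1 χ.2.2.2

/-- Squared Euclidean norm of a vector, as an extended nonnegative real. -/
def sqE {d : ℕ} (v : Fin d → ℝ) : ENNReal := ENNReal.ofReal (∑ i, (v i) ^ 2)

-- The operator `D̄_χ(R) = ∑_{χ' ∈ 𝔛} p̄_{χ'χ} R_{χ'}`.
open Classical in
def Dop {NN MM T n : ℕ} [NeZero T] (P : Matrix (Fin NN) (Fin NN) ℝ)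
    (Q : Matrix (Fin MM) (Fin MM) ℝ) (f : Fin MM → Bool)
    (R : XT NN MM T → Matrix (Fin n) (Fin n) ℝ) (χ : XT NN MM T) :
    Matrix (Fin n) (Fin n) ℝ :=
  ∑ χ' : XT NN MM T, if inX f χ' then pbar P Q f χ' χ • R χ' else 0

-- The operator `F̄_χ(Z) = ∑_{χ' ∈ 𝔛} p̄_{χχ'} Z_{χ,χ'}`.
open Classical in
def Fop {NN MM T n : ℕ} [NeZero T] (P : Matrix (Fin NN) (Fin NN) ℝ)
    (Q : Matrix (Fin MM) (Fin MM) ℝ) (f : Fin MM → Bool)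
    (Z : XT NN MM T → XT NN MM T → Matrix (Fin n) (Fin n) ℝ) (χ : XT NN MM T) :
    Matrix (Fin n) (Fin n) ℝ :=
  ∑ χ' : XT NN MM T, if inX f χ' then pbar P Q f χ χ' • Z χ χ' else 0

/-- A pair `(γ,δ) ∈ [N] × [T]` is admissible if `(α,β,γ,δ) ∈ 𝔛` for some `α, β`. -/
def Admissible {NN MM T : ℕ} [NeZero T] (f : Fin MM → Bool) (g : Fin NN) (d : Fin T) : Prop :=
  ∃ (α : Fin NN) (β : Fin MM), inX (T := T) f (α, β, g, d)

/-- A realization, on some probability space, of the pair of independent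
time-homogeneous Markov chains `(r, s)` with transition matrices `P` and `Q`. -/
structure MJLSReal (NN MM : ℕ) (P : Matrix (Fin NN) (Fin NN) ℝ)
    (Q : Matrix (Fin MM) (Fin MM) ℝ) : Type 1 where
  Ω : Type
  inst : MeasurableSpace Ω
  μ : @Measure Ω inst
  prob : IsProbabilityMeasure μ
  r : ℕ → Ω → Fin NN
  s : ℕ → Ω → Fin MM
  meas_r : ∀ k, Measurable[inst] (r k)
  meas_s : ∀ k, Measurable[inst] (s k)
  markov_r : IsMarkovChain μ r fun i j => P i j
  markov_s : IsMarkovChain μ s fun i j => Q i j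
  indep : IndepFun (fun ω l => r l ω) (fun ω l => s l ω) μ

/-- A realization, on some probability space, of a time-homogeneous Markov chain `θ`
taking values in `𝔛` with transition probabilities `p̄`. -/
structure ThetaReal (NN MM T : ℕ) [NeZero T] (P : Matrix (Fin NN) (Fin NN) ℝ)
    (Q : Matrix (Fin MM) (Fin MM) ℝ) (f : Fin MM → Bool) : Type 1 where
  Ω : Type
  inst : MeasurableSpace Ω
  μ : @Measure Ω inst
  prob : IsProbabilityMeasure μ
  θ : ℕ → Ω → XT NN MM T
  meas : ∀ k, Measurable[inst] (θ k)
  mem : ∀ k ω, inX f (θ k ω)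
  markov : IsMarkovChain μ θ (pbar P Q f)

/-- Mean square stability of the closed-loop system `Σ_K`: there are `c > 0` and
`λ ∈ [0,1)` such that for every realization, every deterministic initialization
(`r(0) = r₀`, `s(0) = s₀` a.s., together with `σ₀` and `τ₀ ≤ 0`, so that `r̄(0)`
is a deterministic element of `𝔛`), every `x₀` and every `k`,
`E[‖x(k)‖²] ≤ c λ^k ‖x₀‖²` (with `w ≡ 0`). -/
def MeanSquareStable {NN MM T n m q : ℕ} [NeZero T]
    (P : Matrix (Fin NN) (Fin NN) ℝ) (Qm : Matrix (Fin MM) (Fin MM) ℝ) (f : Fin MM → Bool)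
    (A : Fin NN → Matrix (Fin n) (Fin n) ℝ) (B : Fin NN → Matrix (Fin n) (Fin m) ℝ)
    (E : Fin NN → Matrix (Fin n) (Fin q) ℝ)
    (K : Fin NN → Fin T → Matrix (Fin m) (Fin n) ℝ) : Prop :=
  ∃ c : ℝ, 0 < c ∧ ∃ lam : ℝ, 0 ≤ lam ∧ lam < 1 ∧
    ∀ (S : MJLSReal NN MM P Qm) (τ₀ : ℤ), τ₀ ≤ 0 →
      ∀ (σ₀ r₀ : Fin NN) (s₀ : Fin MM),
        (∀ᵐ ω ∂S.μ, S.r 0 ω = r₀ ∧ S.s 0 ω = s₀) →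
        ∀ (x0 : Fin n → ℝ) (k : ℕ),
          (∫⁻ ω, sqE (traj (AKmat A B K) (fun χ => E χ.1)
              (rbarProc S.r S.s f τ₀ σ₀) (fun _ _ => 0) x0 k ω) ∂S.μ)
            ≤ ENNReal.ofReal (c * lam ^ k * ∑ i, (x0 i) ^ 2)

/-- Mean square stability of `Σ̄_K` (the system driven by the chain `θ`). -/
def MeanSquareStableBar {NN MM T n m q : ℕ} [NeZero T]
    (P : Matrix (Fin NN) (Fin NN) ℝ) (Qm : Matrix (Fin MM) (Fin MM) ℝ) (f : Fin MM → Bool)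
    (A : Fin NN → Matrix (Fin n) (Fin n) ℝ) (B : Fin NN → Matrix (Fin n) (Fin m) ℝ)
    (E : Fin NN → Matrix (Fin n) (Fin q) ℝ)
    (K : Fin NN → Fin T → Matrix (Fin m) (Fin n) ℝ) : Prop :=
  ∃ c : ℝ, 0 < c ∧ ∃ lam : ℝ, 0 ≤ lam ∧ lam < 1 ∧
    ∀ (S : ThetaReal NN MM T P Qm f) (χ : XT NN MM T), inX f χ →
      (∀ᵐ ω ∂S.μ, S.θ 0 ω = χ) →
      ∀ (x0 : Fin n → ℝ) (k : ℕ),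
        (∫⁻ ω, sqE (traj (AKmat A B K) (fun χ' => E χ'.1) S.θ (fun _ _ => 0) x0 k ω) ∂S.μ)
          ≤ ENNReal.ofReal (c * lam ^ k * ∑ i, (x0 i) ^ 2)

/-- The impulse disturbance `w = e_i φ`, i.e. `w(0) = e_i` and `w(k) = 0` for `k ≥ 1`. -/
def impulse {Ω : Type} (q : ℕ) (i : Fin q) : ℕ → Ω → Fin q → ℝ :=
  fun k _ j => if k = 0 ∧ j = i then 1 else 0

/-- `∑_k E[‖z(k; 0, χ, e_i φ)‖²]` for `Σ_K` on a given realization with data `(τ₀, σ₀)`. -/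
def H2TermSigma {NN MM T n m q ℓ : ℕ} [NeZero T]
    {P : Matrix (Fin NN) (Fin NN) ℝ} {Qm : Matrix (Fin MM) (Fin MM) ℝ}
    (S : MJLSReal NN MM P Qm) (f : Fin MM → Bool) (τ₀ : ℤ) (σ₀ : Fin NN)
    (A : Fin NN → Matrix (Fin n) (Fin n) ℝ) (B : Fin NN → Matrix (Fin n) (Fin m) ℝ)
    (C : Fin NN → Matrix (Fin ℓ) (Fin n) ℝ) (D : Fin NN → Matrix (Fin ℓ) (Fin m) ℝ)
    (E : Fin NN → Matrix (Fin n) (Fin q) ℝ)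
    (K : Fin NN → Fin T → Matrix (Fin m) (Fin n) ℝ) (i : Fin q) : ENNReal :=
  ∑' k : ℕ, ∫⁻ ω, sqE ((CKmat C D K (rbarProc S.r S.s f τ₀ σ₀ k ω)).mulVec
      (traj (AKmat A B K) (fun χ => E χ.1) (rbarProc S.r S.s f τ₀ σ₀)
        (impulse q i) 0 k ω)) ∂S.μ

-- `‖Σ_K‖₂² < γ`, where `‖Σ_K‖₂² = ∑_{i=1}^q ∑_{χ ∈ 𝔛} μ̄(χ) ‖z(⬝;0,χ,e_iφ)‖₂²` and the
-- expectations are over arbitrary realizations with deterministic initialization `r̄(0) = χ`.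
open Classical in
def H2SqLtSigma {NN MM T n m q ℓ : ℕ} [NeZero T]
    (P : Matrix (Fin NN) (Fin NN) ℝ) (Qm : Matrix (Fin MM) (Fin MM) ℝ) (f : Fin MM → Bool)
    (A : Fin NN → Matrix (Fin n) (Fin n) ℝ) (B : Fin NN → Matrix (Fin n) (Fin m) ℝ)
    (C : Fin NN → Matrix (Fin ℓ) (Fin n) ℝ) (D : Fin NN → Matrix (Fin ℓ) (Fin m) ℝ)
    (E : Fin NN → Matrix (Fin n) (Fin q) ℝ)
    (K : Fin NN → Fin T → Matrix (Fin m) (Fin n) ℝ)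
    (μbar : XT NN MM T → ℝ) (γ : ℝ) : Prop :=
  ∀ (S : Fin q → XT NN MM T → MJLSReal NN MM P Qm)
    (τ : Fin q → XT NN MM T → ℤ) (σv : Fin q → XT NN MM T → Fin NN),
    (∀ i χ, inX f χ → τ i χ ≤ 0 ∧
        (∀ᵐ ω ∂(S i χ).μ, rbarProc (S i χ).r (S i χ).s f (τ i χ) (σv i χ) 0 ω = χ)) →
    (∑ i : Fin q, ∑ χ : XT NN MM T,
        if inX f χ
        then ENNReal.ofReal (μbar χ) * H2TermSigma (S i χ) f (τ i χ) (σv i χ) A B C D E K i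
        else 0)
      < ENNReal.ofReal γ

/-- `∑_k E[‖z̄(k; 0, χ, e_i φ)‖²]` for `Σ̄_K` on a given realization of `θ`. -/
def H2TermBar {NN MM T n m q ℓ : ℕ} [NeZero T]
    {P : Matrix (Fin NN) (Fin NN) ℝ} {Qm : Matrix (Fin MM) (Fin MM) ℝ} {f : Fin MM → Bool}
    (S : ThetaReal NN MM T P Qm f)
    (A : Fin NN → Matrix (Fin n) (Fin n) ℝ) (B : Fin NN → Matrix (Fin n) (Fin m) ℝ)
    (C : Fin NN → Matrix (Fin ℓ) (Fin n) ℝ) (D : Fin NN → Matrix (Fin ℓ) (Fin m) ℝ)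
    (E : Fin NN → Matrix (Fin n) (Fin q) ℝ)
    (K : Fin NN → Fin T → Matrix (Fin m) (Fin n) ℝ) (i : Fin q) : ENNReal :=
  ∑' k : ℕ, ∫⁻ ω, sqE ((CKmat C D K (S.θ k ω)).mulVec
      (traj (AKmat A B K) (fun χ => E χ.1) S.θ (impulse q i) 0 k ω)) ∂S.μ

-- `‖Σ̄_K‖₂² < γ` (the `H₂` norm of `Σ̄_K`, defined with `θ` in place of `r̄`).
open Classical in
def H2SqLtBar {NN MM T n m q ℓ : ℕ} [NeZero T]
    (P : Matrix (Fin NN) (Fin NN) ℝ) (Qm : Matrix (Fin MM) (Fin MM) ℝ) (f : Fin MM → Bool)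
    (A : Fin NN → Matrix (Fin n) (Fin n) ℝ) (B : Fin NN → Matrix (Fin n) (Fin m) ℝ)
    (C : Fin NN → Matrix (Fin ℓ) (Fin n) ℝ) (D : Fin NN → Matrix (Fin ℓ) (Fin m) ℝ)
    (E : Fin NN → Matrix (Fin n) (Fin q) ℝ)
    (K : Fin NN → Fin T → Matrix (Fin m) (Fin n) ℝ)
    (μbar : XT NN MM T → ℝ) (γ : ℝ) : Prop :=
  ∀ (S : Fin q → XT NN MM T → ThetaReal NN MM T P Qm f),
    (∀ i χ, inX f χ → (∀ᵐ ω ∂(S i χ).μ, (S i χ).θ 0 ω = χ)) →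
    (∑ i : Fin q, ∑ χ : XT NN MM T,
        if inX f χ
        then ENNReal.ofReal (μbar χ) * H2TermBar (S i χ) A B C D E K i
        else 0)
      < ENNReal.ofReal γ

/-- The σ-algebra `Θ_k` generated by `r(0), s(0), …, r(k), s(k)`, for a realization. -/
def sigFiltSigma {NN MM : ℕ} {P : Matrix (Fin NN) (Fin NN) ℝ}
    {Q : Matrix (Fin MM) (Fin MM) ℝ} (S : MJLSReal NN MM P Q) (k : ℕ) :
    MeasurableSpace S.Ω :=
  ⨆ j ∈ Finset.range (k + 1),
    (MeasurableSpace.comap (S.r j) inferInstance ⊔ MeasurableSpace.comap (S.s j) inferInstance)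

/-- The σ-algebra generated by `θ(0), …, θ(k)`, for a realization of `θ`. -/
def sigFiltBar {NN MM T : ℕ} [NeZero T] {P : Matrix (Fin NN) (Fin NN) ℝ}
    {Q : Matrix (Fin MM) (Fin MM) ℝ} {f : Fin MM → Bool} (S : ThetaReal NN MM T P Q f)
    (k : ℕ) : MeasurableSpace S.Ω :=
  ⨆ j ∈ Finset.range (k + 1), MeasurableSpace.comap (S.θ j) inferInstance

/-- `Σ_K` satisfies `‖Σ_K‖∞² < γ`: there is `0 ≤ c < γ` such that `‖z‖₂² ≤ c ‖w‖₂²`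
for every realization, every deterministic initialization `r̄(0) = r̄₀ ∈ 𝔛`, and
every nonzero `w ∈ ℓ²(ℝ^q)` adapted to `(Θ_k)_k` (with `x₀ = 0`). -/
def HinfSqLtSigma {NN MM T n m q ℓ : ℕ} [NeZero T]
    (P : Matrix (Fin NN) (Fin NN) ℝ) (Qm : Matrix (Fin MM) (Fin MM) ℝ) (f : Fin MM → Bool)
    (A : Fin NN → Matrix (Fin n) (Fin n) ℝ) (B : Fin NN → Matrix (Fin n) (Fin m) ℝ)
    (C : Fin NN → Matrix (Fin ℓ) (Fin n) ℝ) (D : Fin NN → Matrix (Fin ℓ) (Fin m) ℝ)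
    (E : Fin NN → Matrix (Fin n) (Fin q) ℝ)
    (K : Fin NN → Fin T → Matrix (Fin m) (Fin n) ℝ) (γ : ℝ) : Prop :=
  ∃ c : ℝ, 0 ≤ c ∧ c < γ ∧
    ∀ (S : MJLSReal NN MM P Qm) (τ₀ : ℤ), τ₀ ≤ 0 → ∀ (σ₀ : Fin NN) (χ : XT NN MM T),
      inX f χ → (∀ᵐ ω ∂S.μ, rbarProc S.r S.s f τ₀ σ₀ 0 ω = χ) →
      ∀ (w : ℕ → S.Ω → Fin q → ℝ),
        (∀ k, Measurable[sigFiltSigma S k] (w k)) →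
        0 < (∑' k : ℕ, ∫⁻ ω, sqE (w k ω) ∂S.μ) →
        (∑' k : ℕ, ∫⁻ ω, sqE (w k ω) ∂S.μ) ≠ ⊤ →
        (∑' k : ℕ, ∫⁻ ω, sqE ((CKmat C D K (rbarProc S.r S.s f τ₀ σ₀ k ω)).mulVec
            (traj (AKmat A B K) (fun χ' => E χ'.1) (rbarProc S.r S.s f τ₀ σ₀) w 0 k ω)) ∂S.μ)
          ≤ ENNReal.ofReal c * (∑' k : ℕ, ∫⁻ ω, sqE (w k ω) ∂S.μ)

/-- `Σ̄_K` satisfies `‖Σ̄_K‖∞² < γ` (disturbances adapted to the filtration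
generated by `θ`). -/
def HinfSqLtBar {NN MM T n m q ℓ : ℕ} [NeZero T]
    (P : Matrix (Fin NN) (Fin NN) ℝ) (Qm : Matrix (Fin MM) (Fin MM) ℝ) (f : Fin MM → Bool)
    (A : Fin NN → Matrix (Fin n) (Fin n) ℝ) (B : Fin NN → Matrix (Fin n) (Fin m) ℝ)
    (C : Fin NN → Matrix (Fin ℓ) (Fin n) ℝ) (D : Fin NN → Matrix (Fin ℓ) (Fin m) ℝ)
    (E : Fin NN → Matrix (Fin n) (Fin q) ℝ)
    (K : Fin NN → Fin T → Matrix (Fin m) (Fin n) ℝ) (γ : ℝ) : Prop :=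
  ∃ c : ℝ, 0 ≤ c ∧ c < γ ∧
    ∀ (S : ThetaReal NN MM T P Qm f) (χ : XT NN MM T),
      inX f χ → (∀ᵐ ω ∂S.μ, S.θ 0 ω = χ) →
      ∀ (w : ℕ → S.Ω → Fin q → ℝ),
        (∀ k, Measurable[sigFiltBar S k] (w k)) →
        0 < (∑' k : ℕ, ∫⁻ ω, sqE (w k ω) ∂S.μ) →
        (∑' k : ℕ, ∫⁻ ω, sqE (w k ω) ∂S.μ) ≠ ⊤ →
        (∑' k : ℕ, ∫⁻ ω, sqE ((CKmat C D K (S.θ k ω)).mulVec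
            (traj (AKmat A B K) (fun χ' => E χ'.1) S.θ w 0 k ω)) ∂S.μ)
          ≤ ENNReal.ofReal c * (∑' k : ℕ, ∫⁻ ω, sqE (w k ω) ∂S.μ)

/-- The symmetric 4×4 block matrix appearing in the `H∞` LMI, with diagonal blocks
`D1, γ I_q, D3, I_ℓ`, sub-diagonal blocks `(3,1) = B31`, `(3,2) = B32`, `(4,1) = B41`,
the corresponding transposed blocks above the diagonal, and zeros elsewhere. -/
def hinfBlock {n q ℓ : ℕ} (γ : ℝ) (D1 D3 : Matrix (Fin n) (Fin n) ℝ)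
    (B31 : Matrix (Fin n) (Fin n) ℝ) (B32 : Matrix (Fin n) (Fin q) ℝ)
    (B41 : Matrix (Fin ℓ) (Fin n) ℝ) :
    Matrix ((Fin n ⊕ Fin q) ⊕ (Fin n ⊕ Fin ℓ)) ((Fin n ⊕ Fin q) ⊕ (Fin n ⊕ Fin ℓ)) ℝ :=
  Matrix.fromBlocks
    (Matrix.fromBlocks D1 0 0 (γ • (1 : Matrix (Fin q) (Fin q) ℝ)))
    (Matrix.fromBlocks B31ᵀ B41ᵀ B32ᵀ 0)
    (Matrix.fromBlocks B31 B32 B41 0)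
    (Matrix.fromBlocks D3 0 0 (1 : Matrix (Fin ℓ) (Fin ℓ) ℝ))

/-!
Given any event `E` in the past of time `k` on which a Markov chain is in state `x` at time `k`,
the chain moves to `y` with probability `P x y`: split `E` into the countably many histories it
contains. This applies to the pair `(r, s)`, which is a Markov chain by independence, and to any
event expressed through `r̄(0), …, r̄(k)`, because `r̄(j)` is a function of the history of `(r, s)`
up to time `j`. At an observed state the coordinates `σ` and `ρ` are reset to `r` and `1`, so a
transition of `r̄` into such a state is merely a transition of `(r, s)`.
-/

theorem measureReal_inter_preimage_eq_tsum {α β : Type*} [MeasurableSpace α] {μ : Measure α}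
    [IsFiniteMeasure μ] {g : α → β} {B : Set β} (hB : B.Countable)
    (hg : ∀ b ∈ B, MeasurableSet (g ⁻¹' {b})) (A : Set α) :
    μ.real (A ∩ g ⁻¹' B) = ∑' b : B, μ.real (A ∩ g ⁻¹' {↑b}) := by
  have hgB : MeasurableSet (g ⁻¹' B) := by
    rw [← Set.biUnion_preimage_singleton]
    exact .biUnion hB hg
  have restrict_real (C : Set α) (hC : MeasurableSet C) :
      μ.real (A ∩ C) = (μ.restrict A C).toReal := by
    rw [Measure.restrict_apply hC, Set.inter_comm, measureReal_def]
  rw [restrict_real _ hgB, ← tsum_measure_preimage_singleton hB hg,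
    ENNReal.tsum_toReal_eq fun _ => measure_ne_top _ _]
  exact tsum_congr fun b => (restrict_real _ (hg b b.2)).symm

section MarkovChain

variable {Ω S : Type}

/-- The path of the process `X` up to and including time `k`. An event `E` lies in the past of time
`k` when membership in `E` factors through `history X k`; on countable state spaces this is
measurability with respect to the natural filtration. -/
def history (X : ℕ → Ω → S) (k : ℕ) (ω : Ω) : Set.Iic k → S :=
  fun l => X l ω

theorem history_eq_iff {X : ℕ → Ω → S} {k : ℕ} {ω ω' : Ω} :
    history X k ω = history X k ω' ↔ ∀ l ≤ k, X l ω = X l ω' := by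
  simp [history, funext_iff]

variable [MeasurableSpace Ω] {μ : Measure Ω} [MeasurableSpace S] [MeasurableSingletonClass S]

theorem measurableSet_history_fiber {X : ℕ → Ω → S} (hmX : ∀ l, Measurable (X l)) (k : ℕ)
    (h : Set.Iic k → S) : MeasurableSet (history X k ⁻¹' {h}) := by
  have measurable_history : Measurable (history X k) := measurable_pi_lambda _ fun l => hmX l
  exact measurable_history (measurableSet_singleton h)

theorem IsMarkovChain.measureReal_inter_of_history [IsFiniteMeasure μ] [Countable S]
    {X : ℕ → Ω → S} {P : S → S → ℝ} (hX : IsMarkovChain μ X P) (hmX : ∀ l, Measurable (X l))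
    {k : ℕ} {E : Set Ω} (hE : Function.FactorsThrough (· ∈ E) (history X k)) {x : S}
    (hx : ∀ ω ∈ E, X k ω = x) (y : S) :
    μ.real ({ω | X (k + 1) ω = y} ∩ E) = P x y * μ.real E := by
  have hE_eq : E = history X k ⁻¹' (history X k '' E) := by
    refine (Set.subset_preimage_image _ E).antisymm ?_
    rintro ω ⟨ω₀, hω₀, h⟩
    exact (hE h).mp hω₀
  have sum_histories (A : Set Ω) :
      μ.real (A ∩ E) = ∑' h : history X k '' E, μ.real (A ∩ history X k ⁻¹' {↑h}) := by
    conv_lhs => rw [hE_eq]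
    exact measureReal_inter_preimage_eq_tsum (Set.to_countable _)
      (fun h _ => measurableSet_history_fiber hmX k h) A
  rw [sum_histories, ← congrArg μ.real (Set.univ_inter E), sum_histories, ← tsum_mul_left]
  refine tsum_congr ?_
  rintro ⟨_, ω₀, hω₀, rfl⟩
  have fiber_eq : history X k ⁻¹' {history X k ω₀} = {ω | ∀ l ≤ k, X l ω = X l ω₀} :=
    Set.ext fun ω => history_eq_iff
  rw [fiber_eq, Set.univ_inter, ← hx ω₀ hω₀]
  exact hX k y fun l => X l ω₀

theorem measurableSet_forall_le_eq (k : ℕ) (a : ℕ → S) :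
    MeasurableSet {g : ℕ → S | ∀ l ≤ k, g l = a l} := by
  simp only [Set.ofPred_forall]
  exact .iInter fun l => .iInter fun _ => measurable_pi_apply l (measurableSet_singleton _)

theorem IsMarkovChain.prodMk {S' : Type} [MeasurableSpace S'] [MeasurableSingletonClass S']
    {X : ℕ → Ω → S} {Y : ℕ → Ω → S'} {P : S → S → ℝ} {Q : S' → S' → ℝ}
    (hX : IsMarkovChain μ X P) (hY : IsMarkovChain μ Y Q)
    (hXY : IndepFun (fun ω l => X l ω) (fun ω l => Y l ω) μ) :
    IsMarkovChain μ (fun l ω => (X l ω, Y l ω)) fun i j => P i.1 j.1 * Q i.2 j.2 := by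
  rintro k ⟨x, y⟩ i
  let A : Set (ℕ → S) := {g | ∀ l ≤ k, g l = (i l).1}
  let B : Set (ℕ → S') := {g | ∀ l ≤ k, g l = (i l).2}
  let A' : Set (ℕ → S) := (· (k + 1)) ⁻¹' {x} ∩ A
  let B' : Set (ℕ → S') := (· (k + 1)) ⁻¹' {y} ∩ B
  have hA : MeasurableSet A := measurableSet_forall_le_eq k _
  have hB : MeasurableSet B := measurableSet_forall_le_eq k _
  have hA' : MeasurableSet A' :=
    (measurable_pi_apply (k + 1) (measurableSet_singleton x)).inter hA
  have hB' : MeasurableSet B' :=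
    (measurable_pi_apply (k + 1) (measurableSet_singleton y)).inter hB
  have past_eq : {ω | ∀ l ≤ k, (X l ω, Y l ω) = i l}
      = (fun ω l => X l ω) ⁻¹' A ∩ (fun ω l => Y l ω) ⁻¹' B := by
    ext ω
    simp [A, B, Prod.ext_iff, forall_and]
  have step_eq : {ω | (X (k + 1) ω, Y (k + 1) ω) = (x, y) ∧ ∀ l ≤ k, (X l ω, Y l ω) = i l}
      = (fun ω l => X l ω) ⁻¹' A' ∩ (fun ω l => Y l ω) ⁻¹' B' := by
    rw [Set.ofPred_and, past_eq]
    ext ω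
    simp [A', B', and_and_and_comm]
  calc (μ {ω | (X (k + 1) ω, Y (k + 1) ω) = (x, y) ∧ ∀ l ≤ k, (X l ω, Y l ω) = i l}).toReal
      = (μ ((fun ω l => X l ω) ⁻¹' A')).toReal * (μ ((fun ω l => Y l ω) ⁻¹' B')).toReal := by
        rw [step_eq, hXY.measure_inter_preimage_eq_mul _ _ hA' hB', ENNReal.toReal_mul]
    _ = (P (i k).1 x * (μ ((fun ω l => X l ω) ⁻¹' A)).toReal)
          * (Q (i k).2 y * (μ ((fun ω l => Y l ω) ⁻¹' B)).toReal) :=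
        congrArg₂ _ (hX k x fun l => (i l).1) (hY k y fun l => (i l).2)
    _ = P (i k).1 x * Q (i k).2 y * (μ {ω | ∀ l ≤ k, (X l ω, Y l ω) = i l}).toReal := by
        rw [past_eq, hXY.measure_inter_preimage_eq_mul _ _ hA hB, ENNReal.toReal_mul,
          mul_mul_mul_comm]

end MarkovChain

theorem findGreatest_congr {p q : ℕ → Prop} [DecidablePred p] [DecidablePred q] {n : ℕ}
    (h : ∀ i ≤ n, (p i ↔ q i)) : Nat.findGreatest p n = Nat.findGreatest q n := by
  induction n with
  | zero => simp
  | succ n ih =>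
    rw [Nat.findGreatest_succ, Nat.findGreatest_succ, ih fun i hi => h i (hi.trans n.le_succ),
      if_congr (h (n + 1) le_rfl) rfl rfl]

section ObservedProcess

variable {Ω : Type} {NN MM T : ℕ} {r : ℕ → Ω → Fin NN} {s : ℕ → Ω → Fin MM} {f : Fin MM → Bool}
  {τ₀ : ℤ} {σ₀ : Fin NN} {k : ℕ} {ω ω' : Ω}

theorem exists_observed_congr (hs : ∀ l ≤ k, s l ω = s l ω') :
    (∃ j ≤ k, f (s j ω) = true) ↔ ∃ j ≤ k, f (s j ω') = true :=
  exists_congr fun j => and_congr_right fun hj => by rw [hs j hj]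

theorem tauZ_congr (hs : ∀ l ≤ k, s l ω = s l ω') : tauZ s f τ₀ k ω = tauZ s f τ₀ k ω' :=
  if_congr (exists_observed_congr hs)
    (congrArg Nat.cast (findGreatest_congr fun l hl => by rw [hs l hl])) rfl

theorem sigmaProc_congr (hr : ∀ l ≤ k, r l ω = r l ω') (hs : ∀ l ≤ k, s l ω = s l ω') :
    sigmaProc r s f σ₀ k ω = sigmaProc r s f σ₀ k ω' := by
  refine if_congr (exists_observed_congr hs) ?_ rfl
  rw [hr _ (Nat.findGreatest_le k)]
  exact congrArg (r · ω') (findGreatest_congr fun l hl => by rw [hs l hl])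

theorem tauZ_of_observed (h : f (s k ω) = true) : tauZ s f τ₀ k ω = k := by
  rw [tauZ, if_pos ⟨k, le_rfl, h⟩, Nat.findGreatest_eq h]

theorem sigmaProc_of_observed (h : f (s k ω) = true) : sigmaProc r s f σ₀ k ω = r k ω := by
  rw [sigmaProc, if_pos ⟨k, le_rfl, h⟩, Nat.findGreatest_eq h]

variable [NeZero T]

theorem rhoProc_of_observed (h : f (s k ω) = true) : (rhoProc s f τ₀ k ω : Fin T) = 0 := by
  simp [rhoProc, tauZ_of_observed h, intToFin]

theorem rbarProc_eq_iff_of_observed {χ : XT NN MM T} (hf : f χ.2.1 = true) :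
    rbarProc r s f τ₀ σ₀ k ω = χ ↔
      (r k ω, s k ω) = (χ.1, χ.2.1) ∧ χ.1 = χ.2.2.1 ∧ χ.2.2.2 = 0 := by
  obtain ⟨α, β, γ, δ⟩ := χ
  simp only [rbarProc, Prod.mk.injEq, and_assoc]
  refine and_congr_right fun hα => and_congr_right fun hβ => ?_
  have h : f (s k ω) = true := hβ ▸ hf
  rw [sigmaProc_of_observed h, rhoProc_of_observed h, hα, @eq_comm _ 0 δ]

theorem rbarProc_factorsThrough_history {j : ℕ} (hj : j ≤ k) :
    (rbarProc (T := T) r s f τ₀ σ₀ j).FactorsThrough (history (fun l ω => (r l ω, s l ω)) k) := by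
  intro ω ω' h
  have hrs (l : ℕ) (hl : l ≤ j) : r l ω = r l ω' ∧ s l ω = s l ω' :=
    Prod.mk.inj (history_eq_iff.mp h l (hl.trans hj))
  have hr (l : ℕ) (hl : l ≤ j) : r l ω = r l ω' := (hrs l hl).1
  have hs (l : ℕ) (hl : l ≤ j) : s l ω = s l ω' := (hrs l hl).2
  simp only [rbarProc, rhoProc, tauZ_congr hs, sigmaProc_congr hr hs, hr j le_rfl, hs j le_rfl]

end ObservedProcess

theorem measureReal_rbarProc_observed_inter
    {Ω : Type} [MeasurableSpace Ω] {μ : Measure Ω} [IsFiniteMeasure μ]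
    {NN MM T : ℕ} [NeZero T] {P : Matrix (Fin NN) (Fin NN) ℝ} {Q : Matrix (Fin MM) (Fin MM) ℝ}
    {r : ℕ → Ω → Fin NN} {s : ℕ → Ω → Fin MM}
    (hmr : ∀ k, Measurable (r k)) (hms : ∀ k, Measurable (s k))
    (hr : IsMarkovChain μ r fun i j => P i j) (hs : IsMarkovChain μ s fun i j => Q i j)
    (hind : IndepFun (fun ω l => r l ω) (fun ω l => s l ω) μ)
    {f : Fin MM → Bool} (τ₀ : ℤ) (σ₀ : Fin NN) {k : ℕ} {E : Set Ω}
    (hE : Function.FactorsThrough (· ∈ E) (history (fun l ω => (r l ω, s l ω)) k))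
    {α : Fin NN} {β : Fin MM} (hαβ : ∀ ω ∈ E, (r k ω, s k ω) = (α, β))
    {χ' : XT NN MM T} (hf : f χ'.2.1 = true) :
    μ.real ({ω | rbarProc r s f τ₀ σ₀ (k + 1) ω = χ'} ∩ E)
      = (if χ'.1 = χ'.2.2.1 ∧ χ'.2.2.2 = 0 then (1 : ℝ) else 0)
          * P α χ'.1 * Q β χ'.2.1 * μ.real E := by
  simp only [rbarProc_eq_iff_of_observed hf]
  split_ifs with hχ'
  · simp only [and_iff_left hχ', one_mul]
    exact (hr.prodMk hs hind).measureReal_inter_of_history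
      (fun l => (hmr l).prodMk (hms l)) hE hαβ (χ'.1, χ'.2.1)
  · simp [hχ']

theorem rbar_transition_observed_general
    {Ω : Type} [MeasurableSpace Ω] (μ : Measure Ω) [IsFiniteMeasure μ]
    {NN MM T : ℕ} [NeZero T]
    (P : Matrix (Fin NN) (Fin NN) ℝ) (Q : Matrix (Fin MM) (Fin MM) ℝ)
    (r : ℕ → Ω → Fin NN) (s : ℕ → Ω → Fin MM)
    (hmr : ∀ k, Measurable (r k)) (hms : ∀ k, Measurable (s k))
    (hr : IsMarkovChain μ r fun i j => P i j) (hs : IsMarkovChain μ s fun i j => Q i j)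
    (hind : IndepFun (fun ω l => r l ω) (fun ω l => s l ω) μ)
    (f : Fin MM → Bool) (τ₀ : ℤ) (σ₀ : Fin NN) (k₀ k : ℕ) (hk : k₀ ≤ k)
    (χ : ℕ → XT NN MM T) (χ' : XT NN MM T) (hf : f χ'.2.1 = true)
    (hpos : 0 < (μ {ω | ∀ j, k₀ ≤ j → j ≤ k → rbarProc r s f τ₀ σ₀ j ω = χ j}).toReal) :
    (μ ({ω | rbarProc r s f τ₀ σ₀ (k + 1) ω = χ'}
        ∩ {ω | ∀ j, k₀ ≤ j → j ≤ k → rbarProc r s f τ₀ σ₀ j ω = χ j})).toReal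
      / (μ {ω | ∀ j, k₀ ≤ j → j ≤ k → rbarProc r s f τ₀ σ₀ j ω = χ j}).toReal
      = (if χ'.1 = χ'.2.2.1 ∧ χ'.2.2.2 = 0 then (1 : ℝ) else 0)
          * P (χ k).1 χ'.1 * Q (χ k).2.1 χ'.2.1 := by
  rw [div_eq_iff hpos.ne']
  refine measureReal_rbarProc_observed_inter hmr hms hr hs hind τ₀ σ₀ ?_ ?_ hf
  · intro ω ω' h
    refine propext (forall₃_congr fun j _ hj => ?_)
    rw [rbarProc_factorsThrough_history hj h]
  · intro ω hω
    rw [← hω k hk le_rfl]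
    rfl

/-- the conditional transition probabilities of `r̄` at a state `χ'`
with `f(β') = 1`. -/
theorem rbar_transition_observed
    {Ω : Type} [MeasurableSpace Ω] (μ : Measure Ω) [IsProbabilityMeasure μ]
    {NN MM T : ℕ} [NeZero NN] [NeZero MM] [NeZero T]
    (P : Matrix (Fin NN) (Fin NN) ℝ) (Q : Matrix (Fin MM) (Fin MM) ℝ)
    (hP0 : ∀ i j, 0 ≤ P i j) (hP1 : ∀ i, ∑ j, P i j = 1)
    (hQ0 : ∀ i j, 0 ≤ Q i j) (hQ1 : ∀ i, ∑ j, Q i j = 1)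
    (r : ℕ → Ω → Fin NN) (s : ℕ → Ω → Fin MM)
    (hmr : ∀ k, Measurable (r k)) (hms : ∀ k, Measurable (s k))
    (hr : IsMarkovChain μ r fun i j => P i j) (hs : IsMarkovChain μ s fun i j => Q i j)
    (hind : IndepFun (fun ω l => r l ω) (fun ω l => s l ω) μ)
    (f : Fin MM → Bool) (τ₀ : ℤ) (hτ₀ : τ₀ ≤ 0) (σ₀ : Fin NN)
    (k₀ k : ℕ) (hk : k₀ ≤ k)
    (χ : ℕ → XT NN MM T) (hχ : ∀ j, k₀ ≤ j → j ≤ k → inX f (χ j))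
    (χ' : XT NN MM T) (hχ' : inX f χ') (hf : f χ'.2.1 = true)
    (hpos : 0 < (μ {ω | ∀ j, k₀ ≤ j → j ≤ k → rbarProc r s f τ₀ σ₀ j ω = χ j}).toReal) :
    (μ ({ω | rbarProc r s f τ₀ σ₀ (k + 1) ω = χ'}
        ∩ {ω | ∀ j, k₀ ≤ j → j ≤ k → rbarProc r s f τ₀ σ₀ j ω = χ j})).toReal
      / (μ {ω | ∀ j, k₀ ≤ j → j ≤ k → rbarProc r s f τ₀ σ₀ j ω = χ j}).toReal
      = (if χ'.1 = χ'.2.2.1 ∧ χ'.2.2.2 = 0 then (1 : ℝ) else 0)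
          * P (χ k).1 χ'.1 * Q (χ k).2.1 χ'.2.1 :=
  rbar_transition_observed_general μ P Q r s hmr hms hr hs hind f τ₀ σ₀ k₀ k hk χ χ' hf hpos

end
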